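/- arXiv:2307.08402 — 5 statements merged into one kernel-verified Lean document; each statement's English description precedes it below -/
import Mathlib

section
/- Let p ∈ [1,∞) and let μ, ν be probability measures on ℝ with finite p-th moments, with distribution functions F and G respectively. Then W_p(μ,ν)^p = ∫₀¹ |F⁻¹(u) − G⁻¹(u)|^p du, where F⁻¹ and G⁻¹ are the generalized inverses of F and G. -/
/-!
For a coupling `π` of `μ` and `ν` and `r ≥ 0`, Tonelli gives
`∫ (y - x - r)⁺ dπ = ∫ π{x ≤ s, s + r < y} ds`, and the integrand is at least
`(F s - G (s + r))⁺`. The quantile coupling, the law of `(F⁻¹ U, G⁻¹ U)` with `U` uniform on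
`(0, 1)`, attains this bound because `F⁻¹ u ≤ x ↔ u ≤ F x` (`qinv_le_iff`), so it minimizes the
cost `(y - x - r)⁺` for every `r` at once (`lintegral_qinv_le`), and by symmetry also
`(x - y - r)⁺`.

The cost `|h| ^ p` is a positive mixture over `r ≥ 0` of `(h - r)⁺ + (-h - r)⁺`: the mixing
measure is `p (p - 1) r ^ (p - 2) dr` for `p > 1` and the Dirac mass at `0` for `p = 1`
(`exists_mixture`). Hence the quantile coupling is also optimal for `|x - y| ^ p`.
-/

open MeasureTheory ENNReal Set

/-- Generalized inverse (quantile function) of a distribution function `F`: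
`F⁻¹(u) = inf {x : F x ≥ u}`. -/
noncomputable def qinv (F : ℝ → ℝ) (u : ℝ) : ℝ := sInf {x : ℝ | u ≤ F x}

/-- `π` is a coupling of `μ` and `ν`. -/
def IsCoupling {α : Type*} [MeasurableSpace α] (π : MeasureTheory.Measure (α × α))
    (μ ν : MeasureTheory.Measure α) : Prop :=
  π.map Prod.fst = μ ∧ π.map Prod.snd = ν

/-- The `p`-th power of the `p`-Wasserstein distance on `ℝ`:
`W_p(μ,ν)^p = inf over couplings π of ∫ |x-y|^p dπ`. -/
noncomputable def WpPow (p : ℝ) (μ ν : MeasureTheory.Measure ℝ) : ℝ≥0∞ :=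
  ⨅ π ∈ {π : MeasureTheory.Measure (ℝ × ℝ) | IsCoupling π μ ν},
    ∫⁻ z, ENNReal.ofReal (|z.1 - z.2| ^ p) ∂π

open ProbabilityTheory Filter Topology

lemma qinv_le_iff (μ : Measure ℝ) [IsProbabilityMeasure μ] {u : ℝ} (hu : u ∈ Ioo (0:ℝ) 1)
    (x : ℝ) : qinv (cdf μ) u ≤ x ↔ u ≤ cdf μ x := by
  have hne : {x : ℝ | u ≤ cdf μ x}.Nonempty :=
    ((tendsto_cdf_atTop μ).eventually (eventually_ge_nhds hu.2)).exists
  have hbdd : BddBelow {x : ℝ | u ≤ cdf μ x} := by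
    obtain ⟨b, hb⟩ := ((tendsto_cdf_atBot μ).eventually_lt_const hu.1).exists
    refine ⟨b, fun y hy => ?_⟩
    by_contra hlt
    exact absurd (le_trans hy (monotone_cdf μ (not_le.1 hlt).le)) (not_le.2 hb)
  refine ⟨fun h => ?_, fun h => csInf_le hbdd h⟩
  have hright : Tendsto (cdf μ) (𝓝[>] x) (𝓝 (cdf μ x)) :=
    ((cdf μ).right_continuous x).mono_left (nhdsWithin_mono _ Ioi_subset_Ici_self)
  refine ge_of_tendsto hright ?_
  filter_upwards [self_mem_nhdsWithin] with y hy
  obtain ⟨z, hz, hzy⟩ := exists_lt_of_csInf_lt hne (lt_of_le_of_lt h hy)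
  exact le_trans hz (monotone_cdf μ hzy.le)

lemma aemeasurable_qinv (μ : Measure ℝ) [IsProbabilityMeasure μ] :
    AEMeasurable (qinv (cdf μ)) (volume.restrict (Ioo (0:ℝ) 1)) := by
  refine aemeasurable_restrict_of_monotoneOn measurableSet_Ioo fun u hu v hv huv => ?_
  exact (qinv_le_iff μ hu _).2 (huv.trans ((qinv_le_iff μ hv _).1 le_rfl))

lemma map_qinv (μ : Measure ℝ) [IsProbabilityMeasure μ] :
    (volume.restrict (Ioo (0:ℝ) 1)).map (qinv (cdf μ)) = μ := by
  refine Measure.ext_of_Iic _ _ fun x => ?_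
  rw [Measure.map_apply_of_aemeasurable (aemeasurable_qinv μ) measurableSet_Iic,
    Measure.restrict_apply₀' measurableSet_Ioo.nullMeasurableSet]
  have hset : qinv (cdf μ) ⁻¹' Iic x ∩ Ioo 0 1 = Iic (cdf μ x) ∩ Ioo 0 1 := by
    ext u
    simp only [mem_inter_iff, mem_preimage, mem_Iic]
    exact ⟨fun h => ⟨(qinv_le_iff μ h.2 x).1 h.1, h.2⟩,
      fun h => ⟨(qinv_le_iff μ h.2 x).2 h.1, h.2⟩⟩
  rw [hset, ← ofReal_cdf μ x]
  refine le_antisymm ?_ ?_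
  · calc volume (Iic (cdf μ x) ∩ Ioo 0 1) ≤ volume (Ioc 0 (cdf μ x)) :=
          measure_mono fun u hu => ⟨hu.2.1, hu.1⟩
      _ = ENNReal.ofReal (cdf μ x) := by simp
  · calc ENNReal.ofReal (cdf μ x) = volume (Ioo 0 (cdf μ x)) := by simp
      _ ≤ volume (Iic (cdf μ x) ∩ Ioo 0 1) :=
          measure_mono fun u hu => ⟨hu.2.le, hu.1, hu.2.trans_le (cdf_le_one μ x)⟩

/-- The law of `(F⁻¹ U, G⁻¹ U)` for `U` uniform on `(0, 1)`, where `F` and `G` are the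
distribution functions of `μ` and `ν`. -/
noncomputable def quantileCoupling (μ ν : Measure ℝ) : Measure (ℝ × ℝ) :=
  (volume.restrict (Ioo (0:ℝ) 1)).map (fun u => (qinv (cdf μ) u, qinv (cdf ν) u))

lemma isCoupling_quantileCoupling (μ ν : Measure ℝ) [IsProbabilityMeasure μ]
    [IsProbabilityMeasure ν] : IsCoupling (quantileCoupling μ ν) μ ν := by
  have h := (aemeasurable_qinv μ).prodMk (aemeasurable_qinv ν)
  constructor
  · rw [quantileCoupling, AEMeasurable.map_map_of_aemeasurable measurable_fst.aemeasurable h]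
    exact map_qinv μ
  · rw [quantileCoupling, AEMeasurable.map_map_of_aemeasurable measurable_snd.aemeasurable h]
    exact map_qinv ν

/-- Tonelli, applied to `(y - x - r)⁺ = ∫ 1{x ≤ s, s + r < y} ds`. -/
lemma lintegral_posPart_eq (π : Measure (ℝ × ℝ)) [SFinite π] (r : ℝ) :
    ∫⁻ z, ENNReal.ofReal (z.2 - z.1 - r) ∂π
      = ∫⁻ s : ℝ, π {z | z.1 ≤ s ∧ s + r < z.2} := by
  have hm : MeasurableSet {q : (ℝ × ℝ) × ℝ | q.1.1 ≤ q.2 ∧ q.2 + r < q.1.2} :=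
    (measurableSet_le measurable_fst.fst measurable_snd).inter
      (measurableSet_lt (measurable_snd.add_const r) measurable_fst.snd)
  have h1 := Measure.prod_apply (μ := π) (ν := (volume : Measure ℝ)) hm
  have h2 := Measure.prod_apply_symm (μ := π) (ν := (volume : Measure ℝ)) hm
  calc _ = ∫⁻ z, volume (Prod.mk z ⁻¹' {q : (ℝ × ℝ) × ℝ | q.1.1 ≤ q.2 ∧ q.2 + r < q.1.2}) ∂π := by
        refine lintegral_congr fun z => ?_
        have : Prod.mk z ⁻¹' {q : (ℝ × ℝ) × ℝ | q.1.1 ≤ q.2 ∧ q.2 + r < q.1.2}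
            = Ico z.1 (z.2 - r) := by
          ext s
          simp [lt_sub_iff_add_lt]
        rw [this, Real.volume_Ico]
        congr 1
        ring
    _ = _ := h1.symm.trans h2

lemma le_coupling_apply {π : Measure (ℝ × ℝ)} {μ ν : Measure ℝ} (h : IsCoupling π μ ν)
    (s t : ℝ) : μ (Iic s) - ν (Iic t) ≤ π {z | z.1 ≤ s ∧ t < z.2} := by
  rw [tsub_le_iff_right, ← h.1, ← h.2, Measure.map_apply measurable_fst measurableSet_Iic,
    Measure.map_apply measurable_snd measurableSet_Iic]
  refine (measure_mono fun z hz => ?_).trans (measure_union_le _ _)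
  rcases lt_or_ge t z.2 with ht | ht
  · exact Or.inl ⟨hz, ht⟩
  · exact Or.inr ht

lemma quantileCoupling_apply_le (μ ν : Measure ℝ) [IsProbabilityMeasure μ]
    [IsProbabilityMeasure ν] (s t : ℝ) :
    quantileCoupling μ ν {z | z.1 ≤ s ∧ t < z.2} ≤ μ (Iic s) - ν (Iic t) := by
  have hm : MeasurableSet {z : ℝ × ℝ | z.1 ≤ s ∧ t < z.2} :=
    (measurableSet_le measurable_fst measurable_const).inter
      (measurableSet_lt measurable_const measurable_snd)
  rw [quantileCoupling, Measure.map_apply_of_aemeasurable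
    ((aemeasurable_qinv μ).prodMk (aemeasurable_qinv ν)) hm,
    Measure.restrict_apply₀' measurableSet_Ioo.nullMeasurableSet, ← ofReal_cdf μ, ← ofReal_cdf ν,
    ← ENNReal.ofReal_sub _ (cdf_nonneg ν t), ← Real.volume_Ioc]
  refine measure_mono fun u hu => ⟨?_, (qinv_le_iff μ hu.2 s).1 hu.1.1⟩
  exact not_le.1 fun hle => absurd ((qinv_le_iff ν hu.2 t).2 hle) (not_le.2 hu.1.2)

/-- The quantile coupling is optimal for each of the costs `(y - x - r)⁺`. -/
lemma lintegral_qinv_le {π : Measure (ℝ × ℝ)} [SFinite π] {μ ν : Measure ℝ}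
    [IsProbabilityMeasure μ] [IsProbabilityMeasure ν] (h : IsCoupling π μ ν) (r : ℝ) :
    ∫⁻ u in Ioo (0:ℝ) 1, ENNReal.ofReal (qinv (cdf ν) u - qinv (cdf μ) u - r)
      ≤ ∫⁻ z, ENNReal.ofReal (z.2 - z.1 - r) ∂π := by
  have : IsFiniteMeasure (quantileCoupling μ ν) := by
    unfold quantileCoupling; infer_instance
  calc _ = ∫⁻ z, ENNReal.ofReal (z.2 - z.1 - r) ∂(quantileCoupling μ ν) := by
        rw [quantileCoupling, lintegral_map' (by fun_prop)
          ((aemeasurable_qinv μ).prodMk (aemeasurable_qinv ν))]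
    _ = ∫⁻ s : ℝ, quantileCoupling μ ν {z | z.1 ≤ s ∧ s + r < z.2} := lintegral_posPart_eq _ r
    _ ≤ ∫⁻ s : ℝ, π {z | z.1 ≤ s ∧ s + r < z.2} := lintegral_mono fun s =>
        (quantileCoupling_apply_le μ ν s (s + r)).trans (le_coupling_apply h s (s + r))
    _ = _ := (lintegral_posPart_eq π r).symm

/-- On the half-line `h ≥ 0`, the power `h ^ p` with `p > 1` is the mixture of the hinges
`(h - r)⁺` with density `p (p - 1) r ^ (p - 2)`. -/
lemma rpow_eq_mixture {p : ℝ} (hp : 1 < p) {h : ℝ} (hh : 0 ≤ h) :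
    ENNReal.ofReal (h ^ p) = ENNReal.ofReal p * (ENNReal.ofReal (p - 1) *
      ∫⁻ r in Ioi (0:ℝ), ENNReal.ofReal (h - r) * ENNReal.ofReal (r ^ (p - 2))) := by
  -- The layer-cake formula for `s ↦ s` on `(0, h]` with exponent `p - 1`.
  have hcake := lintegral_rpow_eq_lintegral_meas_lt_mul (volume.restrict (Ioc 0 h))
    (f := fun s : ℝ => s)
    (by filter_upwards [ae_restrict_mem measurableSet_Ioc] with s hs using hs.1.le)
    aemeasurable_id (sub_pos.2 hp)
  have hint : ∫⁻ s in Ioc 0 h, ENNReal.ofReal (s ^ (p - 1)) = ENNReal.ofReal (h ^ p / p) := by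
    rw [← ofReal_integral_eq_lintegral_ofReal]
    · rw [← intervalIntegral.integral_of_le hh, integral_rpow (Or.inl (by linarith))]
      simp [Real.zero_rpow (by linarith : p ≠ 0)]
    · exact (intervalIntegral.intervalIntegrable_rpow' (by linarith)).1
    · filter_upwards [ae_restrict_mem measurableSet_Ioc] with s hs
      exact Real.rpow_nonneg hs.1.le _
  have hcongr : ∫⁻ r in Ioi (0:ℝ), ENNReal.ofReal (h - r) * ENNReal.ofReal (r ^ (p - 2))
      = ∫⁻ t in Ioi (0:ℝ), (volume.restrict (Ioc 0 h)) {a : ℝ | t < a} *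
        ENNReal.ofReal (t ^ (p - 1 - 1)) := by
    refine setLIntegral_congr_fun measurableSet_Ioi fun r hr => ?_
    have hset : {a : ℝ | r < a} ∩ Ioc 0 h = Ioc r h := by
      ext a
      simp only [mem_inter_iff, mem_ofPred_eq, mem_Ioc]
      exact ⟨fun H => ⟨H.1, H.2.2⟩, fun H => ⟨H.1, lt_trans hr H.1, H.2⟩⟩
    have h2 : p - 1 - 1 = p - 2 := by ring
    simp only [Measure.restrict_apply' measurableSet_Ioc, hset, Real.volume_Ioc, h2]
  rw [hcongr, ← hcake, hint, ← ENNReal.ofReal_mul (by linarith)]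
  congr 1
  field_simp

/-- `|h| ^ p` is a positive mixture of the two-sided hinges `(h - r)⁺ + (-h - r)⁺`. -/
lemma exists_mixture {p : ℝ} (hp : 1 ≤ p) : ∃ m : Measure ℝ, SFinite m ∧ ∀ h : ℝ,
    ENNReal.ofReal (|h| ^ p) = ∫⁻ r, (ENNReal.ofReal (h - r) + ENNReal.ofReal (-h - r)) ∂m := by
  -- For `r ≥ 0` one of the two hinges vanishes and the other is `(|h| - r)⁺`.
  have habs : ∀ h r : ℝ, 0 ≤ r →
      ENNReal.ofReal (h - r) + ENNReal.ofReal (-h - r) = ENNReal.ofReal (|h| - r) := by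
    intro h r hr
    rcases le_total 0 h with hh | hh
    · rw [abs_of_nonneg hh, ENNReal.ofReal_of_nonpos (by linarith : -h - r ≤ 0), add_zero]
    · rw [abs_of_nonpos hh, ENNReal.ofReal_of_nonpos (by linarith : h - r ≤ 0), zero_add]
  rcases hp.eq_or_lt with rfl | hp
  · refine ⟨Measure.dirac 0, inferInstance, fun h => ?_⟩
    rw [lintegral_dirac, habs h 0 le_rfl]
    simp
  · refine ⟨(volume.restrict (Ioi (0:ℝ))).withDensity (fun r => ENNReal.ofReal p *
      (ENNReal.ofReal (p - 1) * ENNReal.ofReal (r ^ (p - 2)))), inferInstance, fun h => ?_⟩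
    rw [lintegral_withDensity_eq_lintegral_mul _ (by fun_prop) (by fun_prop),
      rpow_eq_mixture hp (abs_nonneg h), ← lintegral_const_mul _ (by fun_prop),
      ← lintegral_const_mul _ (by fun_prop)]
    refine setLIntegral_congr_fun measurableSet_Ioi fun r hr => ?_
    simp only [Pi.mul_apply, habs h r (le_of_lt hr)]
    ring

/-- The quantile coupling is optimal for the cost `|x - y| ^ p`. -/
lemma lintegral_qinv_rpow_le {p : ℝ} (hp : 1 ≤ p) {π : Measure (ℝ × ℝ)} [SFinite π]
    {μ ν : Measure ℝ} [IsProbabilityMeasure μ] [IsProbabilityMeasure ν] (h : IsCoupling π μ ν) :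
    ∫⁻ u in Ioo (0:ℝ) 1, ENNReal.ofReal (|qinv (cdf μ) u - qinv (cdf ν) u| ^ p)
      ≤ ∫⁻ z, ENNReal.ofReal (|z.1 - z.2| ^ p) ∂π := by
  obtain ⟨m, hm, hmix⟩ := exists_mixture hp
  have hμ := aemeasurable_qinv μ
  have hν := aemeasurable_qinv ν
  have hswap : IsCoupling (π.map Prod.swap) ν μ := by
    constructor
    · rw [Measure.map_map measurable_fst measurable_swap]; exact h.2
    · rw [Measure.map_map measurable_snd measurable_swap]; exact h.1
  simp_rw [hmix]
  rw [lintegral_lintegral_swap, lintegral_lintegral_swap (μ := π) (by fun_prop)]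
  · refine lintegral_mono fun r => ?_
    simp only [neg_sub]
    rw [lintegral_add_left' (by fun_prop), lintegral_add_left (by fun_prop)]
    refine add_le_add ?_ (lintegral_qinv_le h r)
    refine (lintegral_qinv_le hswap r).trans_eq ?_
    rw [lintegral_map (by fun_prop) measurable_swap]
    rfl
  · have h1 : AEMeasurable (fun q : ℝ × ℝ => qinv (cdf μ) q.1)
        ((volume.restrict (Ioo (0:ℝ) 1)).prod m) := hμ.comp_fst
    have h2 : AEMeasurable (fun q : ℝ × ℝ => qinv (cdf ν) q.1)
        ((volume.restrict (Ioo (0:ℝ) 1)).prod m) := hν.comp_fst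
    have h3 : AEMeasurable (fun q : ℝ × ℝ => q.2)
        ((volume.restrict (Ioo (0:ℝ) 1)).prod m) := measurable_snd.aemeasurable
    exact (((h1.sub h2).sub h3).ennreal_ofReal).add (((h1.sub h2).neg.sub h3).ennreal_ofReal)

/-- for probability measures on ℝ with finite `p`-th moments with distribution
functions `F` and `G`, `W_p(μ,ν)^p = ∫₀¹ |F⁻¹(u) - G⁻¹(u)|^p du`. -/
theorem wasserstein_eq_integral_quantile (p : ℝ) (hp : 1 ≤ p)
    (μ ν : MeasureTheory.Measure ℝ) [IsProbabilityMeasure μ] [IsProbabilityMeasure ν]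
    (hμ : ∫⁻ x, ENNReal.ofReal (|x| ^ p) ∂μ ≠ ⊤)
    (hν : ∫⁻ x, ENNReal.ofReal (|x| ^ p) ∂ν ≠ ⊤)
    (F G : ℝ → ℝ)
    (hF : ∀ x, F x = (μ (Iic x)).toReal)
    (hG : ∀ x, G x = (ν (Iic x)).toReal) :
    WpPow p μ ν
      = ∫⁻ u in Ioo (0:ℝ) 1, ENNReal.ofReal (|qinv F u - qinv G u| ^ p) := by
  obtain rfl : F = cdf μ := funext fun x => by rw [hF, cdf_eq_real]; rfl
  obtain rfl : G = cdf ν := funext fun x => by rw [hG, cdf_eq_real]; rfl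
  unfold WpPow
  refine le_antisymm ?_ ?_
  · refine iInf₂_le_of_le _ (isCoupling_quantileCoupling μ ν) (le_of_eq ?_)
    rw [quantileCoupling, lintegral_map' (by fun_prop)
      ((aemeasurable_qinv μ).prodMk (aemeasurable_qinv ν))]
  · refine le_iInf₂ fun π hπ => ?_
    -- A coupling is a probability measure since its first marginal is one.
    have : IsProbabilityMeasure π := by
      constructor
      have h1 : μ univ = 1 := measure_univ
      rwa [← hπ.1, Measure.map_apply measurable_fst MeasurableSet.univ, preimage_univ] at h1
    exact lintegral_qinv_rpow_le hp hπ
end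

section
/- Let X and Y be integrable real random variables on a probability space with distribution functions F and G and joint distribution function H(x,y) = P(X ≤ x, Y ≤ y). Then E|X − Y| = ∫_ℝ [F(y) + G(y) − 2H(y,y)] dy. -/
open MeasureTheory ENNReal Set

/-!
The identity is Tonelli's theorem for `P ⊗ dy` on the region between the graphs of `X` and `Y`,
`S = {(ω, y) | min (X ω) (Y ω) ≤ y < max (X ω) (Y ω)}`. The section of `S` over `ω` is a half-open
interval of length `|X ω - Y ω|`, while the section at height `y` is the symmetric difference of
`{X ≤ y}` and `{Y ≤ y}`, of probability `F y + G y - 2 H y y`.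
-/

/-- for integrable random variables `X, Y` with distribution functions
`F`, `G` and joint distribution function `H`,
`E|X - Y| = ∫_ℝ [F(y) + G(y) - 2 H(y,y)] dy`. -/
theorem expectation_abs_sub_eq_integral_cdf
    {Ω : Type*} [MeasurableSpace Ω] (P : MeasureTheory.Measure Ω) [IsProbabilityMeasure P]
    (X Y : Ω → ℝ) (hX : Measurable X) (hY : Measurable Y)
    (hXint : Integrable X P) (hYint : Integrable Y P)
    (F G : ℝ → ℝ) (H : ℝ → ℝ → ℝ)
    (hF : ∀ x, F x = (P {ω | X ω ≤ x}).toReal)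
    (hG : ∀ y, G y = (P {ω | Y ω ≤ y}).toReal)
    (hH : ∀ x y, H x y = (P {ω | X ω ≤ x ∧ Y ω ≤ y}).toReal) :
    ∫ ω, |X ω - Y ω| ∂P = ∫ y : ℝ, (F y + G y - 2 * H y y) := by
  set S : Set (Ω × ℝ) := {p | min (X p.1) (Y p.1) ≤ p.2 ∧ p.2 < max (X p.1) (Y p.1)} with hSdef
  have hS : MeasurableSet S := by
    have hXm : Measurable fun p : Ω × ℝ => X p.1 := hX.comp measurable_fst
    have hYm : Measurable fun p : Ω × ℝ => Y p.1 := hY.comp measurable_fst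
    exact (measurableSet_le (hXm.min hYm) measurable_snd).inter
      (measurableSet_lt measurable_snd (hXm.max hYm))
  have hleft : ∀ ω, volume (Prod.mk ω ⁻¹' S) = ENNReal.ofReal |X ω - Y ω| := by
    intro ω
    have : Prod.mk ω ⁻¹' S = Ico (min (X ω) (Y ω)) (max (X ω) (Y ω)) := rfl
    rw [this, Real.volume_Ico, max_sub_min_eq_abs, abs_sub_comm]
  have hright : ∀ y, F y + G y - 2 * H y y = (P ((fun ω => (ω, y)) ⁻¹' S)).toReal := by
    intro y
    have hA : MeasurableSet {ω | X ω ≤ y} := measurableSet_le hX measurable_const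
    have hB : MeasurableSet {ω | Y ω ≤ y} := measurableSet_le hY measurable_const
    have hsec : (fun ω => (ω, y)) ⁻¹' S
        = ({ω | X ω ≤ y} \ {ω | Y ω ≤ y}) ∪ ({ω | Y ω ≤ y} \ {ω | X ω ≤ y}) := by
      ext ω
      simp only [hSdef, mem_preimage, mem_ofPred_eq, mem_union, mem_sdiff, min_le_iff, lt_max_iff]
      grind
    have hU := measureReal_union (μ := P) (disjoint_sdiff_sdiff (x := {ω | X ω ≤ y})
      (y := {ω | Y ω ≤ y})) (hB.diff hA)
    have h1 := measureReal_sdiff_add_inter (μ := P) (s := {ω | X ω ≤ y}) hB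
    have h2 := measureReal_sdiff_add_inter (μ := P) (s := {ω | Y ω ≤ y}) hA
    rw [inter_comm] at h2
    have hI : H y y = P.real ({ω | X ω ≤ y} ∩ {ω | Y ω ≤ y}) := hH y y
    have hF' : F y = P.real {ω | X ω ≤ y} := hF y
    have hG' : G y = P.real {ω | Y ω ≤ y} := hG y
    change _ = P.real _
    rw [hsec, hU]
    linarith
  simp_rw [hright]
  rw [integral_eq_lintegral_of_nonneg_ae (f := fun ω => |X ω - Y ω|)
      (Filter.Eventually.of_forall fun _ => abs_nonneg _)
      (hX.sub hY).abs.aestronglyMeasurable,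
    integral_eq_lintegral_of_nonneg_ae (Filter.Eventually.of_forall fun _ => toReal_nonneg)
      (measurable_measure_prodMk_right hS).ennreal_toReal.aestronglyMeasurable]
  simp_rw [← hleft, ENNReal.ofReal_toReal (measure_ne_top P _)]
  rw [← Measure.prod_apply hS, ← Measure.prod_apply_symm hS]
end

section
/- Let p > 1 and let μ, ν be probability measures on ℝ with finite p-th moments and distribution functions F and G. Among all couplings π of μ and ν, the integral ∫_{ℝ×ℝ} |y−x|^p dπ(x,y) is minimized by the coupling whose joint distribution function is H(x,y) = min{F(x), G(y)}; in particular W_p(μ,ν)^p = ∫_{ℝ×ℝ} |y−x|^p dπ_M(x,y), where π_M is the unique probability measure on ℝ×ℝ with joint distribution function min{F(x), G(y)}. -/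
/-!
All integrals are `ℝ≥0∞`-valued, so Tonelli applies throughout without integrability conditions.

*Optimality.* For `p > 1` the second-order Taylor formula of `t ↦ t ^ p` at `0` gives
`|d| ^ p = ∫_{s > 0} p (p - 1) s ^ (p - 2) ((d - s)₊ + (-d - s)₊) ds`, a superposition of hinge
costs with nonnegative weights (`ofReal_abs_rpow_eq`). Each hinge is itself a superposition of
indicators of quadrants: `(y - x - s)₊ = ∫_r 1{x ≤ r - s, r < y} dr`, so its integral against `π`
is `∫_r π (Iic (r - s) ×ˢ Ioi r) dr` (`lintegral_hinge`). For a coupling,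
`π (Iic a ×ˢ Ioi b) = F a - π (Iic a ×ˢ Iic b)`, and `π (Iic a ×ˢ Iic b) ≤ min (F a) (G b)` with
equality for the comonotone coupling, which therefore minimizes every quadrant mass, hence the cost.

*Existence and uniqueness.* The comonotone coupling is the law of the pair of quantile functions
under Lebesgue measure on `(0, 1)`, by the Galois connection `quantile μ u ≤ x ↔ u ≤ F x`.
It is determined by its joint distribution function because the lower-left quadrants form a
π-system generating the Borel sets of the plane.
-/

open MeasureTheory ENNReal Set

/-! ### Hinge decomposition of the cost -/

/-- Taylor's formula with integral remainder for `t ^ p` at `0`. -/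
lemma integral_rpow_mul_sub {p t : ℝ} (hp : 1 < p) (ht : 0 ≤ t) :
    IntervalIntegrable (fun s : ℝ => p * (p - 1) * s ^ (p - 2) * (t - s)) volume 0 t ∧
      ∫ s in (0 : ℝ)..t, p * (p - 1) * s ^ (p - 2) * (t - s) = t ^ p := by
  have i1 : IntervalIntegrable (fun s : ℝ => s ^ (p - 2)) volume 0 t :=
    intervalIntegral.intervalIntegrable_rpow' (by linarith)
  have h : IntervalIntegrable (fun s : ℝ => p * (p - 1) * s ^ (p - 2) * (t - s)) volume 0 t :=
    (i1.const_mul _).mul_continuousOn (by fun_prop)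
  refine ⟨h, ?_⟩
  have i2 : IntervalIntegrable (fun s : ℝ => s ^ (p - 1)) volume 0 t :=
    intervalIntegral.intervalIntegrable_rpow' (by linarith)
  have e : ∫ s in (0 : ℝ)..t, p * (p - 1) * s ^ (p - 2) * (t - s) =
      ∫ s in (0 : ℝ)..t, (p * (p - 1) * t * s ^ (p - 2) - p * (p - 1) * s ^ (p - 1)) := by
    apply intervalIntegral.integral_congr_ae
    refine Filter.Eventually.of_forall fun s hs => ?_
    rw [uIoc_of_le ht] at hs
    have : s ^ (p - 1) = s ^ (p - 2) * s := by
      rw [← Real.rpow_add_one hs.1.ne']; ring_nf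
    rw [this]; ring
  rw [e, intervalIntegral.integral_sub (i1.const_mul _) (i2.const_mul _),
    intervalIntegral.integral_const_mul, intervalIntegral.integral_const_mul,
    integral_rpow (Or.inl (by linarith)), integral_rpow (Or.inl (by linarith))]
  have h1 : p - 2 + 1 = p - 1 := by ring
  have h2 : p - 1 + 1 = p := by ring
  have hp1 : p - 1 ≠ 0 := by linarith
  have hp0 : p ≠ 0 := by linarith
  rw [h1, h2, Real.zero_rpow hp1, Real.zero_rpow hp0]
  rcases ht.eq_or_lt with rfl | ht
  · simp [Real.zero_rpow hp0]
  · have : t ^ p = t ^ (p - 1) * t := by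
      rw [← Real.rpow_add_one ht.ne']; ring_nf
    rw [this]
    field_simp
    ring

lemma ofReal_rpow_eq {p t : ℝ} (hp : 1 < p) (ht : 0 ≤ t) :
    ENNReal.ofReal (t ^ p) =
      ∫⁻ s in Ioi (0 : ℝ), ENNReal.ofReal (p * (p - 1) * s ^ (p - 2)) * ENNReal.ofReal (t - s) := by
  obtain ⟨hi, he⟩ := integral_rpow_mul_sub hp ht
  have hc : 0 ≤ p * (p - 1) := mul_nonneg (by linarith) (by linarith)
  rw [← he, intervalIntegral.integral_of_le ht, ofReal_integral_eq_lintegral_ofReal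
    ((intervalIntegrable_iff_integrableOn_Ioc_of_le ht).1 hi)]
  · rw [← lintegral_indicator measurableSet_Ioc, ← lintegral_indicator measurableSet_Ioi]
    congr 1
    funext s
    by_cases h0 : 0 < s
    · by_cases h1 : s ≤ t
      · rw [indicator_of_mem (show s ∈ Ioc 0 t from ⟨h0, h1⟩), indicator_of_mem (mem_Ioi.2 h0),
          ENNReal.ofReal_mul (mul_nonneg hc (Real.rpow_nonneg h0.le _))]
      · rw [indicator_of_notMem (fun h => h1 h.2), indicator_of_mem (mem_Ioi.2 h0),
          ENNReal.ofReal_of_nonpos (p := t - s) (by linarith), mul_zero]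
    · rw [indicator_of_notMem (fun h => h0 h.1), indicator_of_notMem (s := Ioi 0) (fun h => h0 h)]
  · refine (ae_restrict_iff' measurableSet_Ioc).2 (Filter.Eventually.of_forall fun s hs => ?_)
    exact mul_nonneg (mul_nonneg hc (Real.rpow_nonneg hs.1.le _)) (by linarith [hs.2])

lemma ofReal_abs_rpow_eq {p : ℝ} (hp : 1 < p) (d : ℝ) :
    ENNReal.ofReal (|d| ^ p) =
      ∫⁻ s in Ioi (0 : ℝ), ENNReal.ofReal (p * (p - 1) * s ^ (p - 2)) *
        (ENNReal.ofReal (d - s) + ENNReal.ofReal (-d - s)) := by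
  rw [ofReal_rpow_eq hp (abs_nonneg d)]
  refine setLIntegral_congr_fun measurableSet_Ioi fun s (hs : 0 < s) => ?_
  congr 1
  rcases le_total 0 d with h | h
  · rw [abs_of_nonneg h, ENNReal.ofReal_of_nonpos (p := -d - s) (by linarith), add_zero]
  · rw [abs_of_nonpos h, ENNReal.ofReal_of_nonpos (p := d - s) (by linarith), zero_add]

/-- Quadrant decomposition of a hinge cost in two measurable coordinates `f`, `g`; stated for
general `f`, `g` so that it covers both `(y - x - s)₊` and `(x - y - s)₊`. -/
lemma lintegral_hinge {Ω : Type*} [MeasurableSpace Ω] (π : Measure Ω) [SFinite π]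
    {f g : Ω → ℝ} (hf : Measurable f) (hg : Measurable g) (s : ℝ) :
    ∫⁻ z, ENNReal.ofReal (g z - f z - s) ∂π =
      ∫⁻ r, π {z | f z ≤ r - s ∧ r < g z} := by
  have hm : MeasurableSet {q : Ω × ℝ | f q.1 ≤ q.2 - s ∧ q.2 < g q.1} :=
    (measurableSet_le (hf.comp measurable_fst) (measurable_snd.sub_const s)).inter
      (measurableSet_lt measurable_snd (hg.comp measurable_fst))
  calc ∫⁻ z, ENNReal.ofReal (g z - f z - s) ∂π
      = ∫⁻ z, volume (Prod.mk z ⁻¹' {q : Ω × ℝ | f q.1 ≤ q.2 - s ∧ q.2 < g q.1}) ∂π := by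
        congr 1
        funext z
        have : Prod.mk z ⁻¹' {q : Ω × ℝ | f q.1 ≤ q.2 - s ∧ q.2 < g q.1}
            = Ico (f z + s) (g z) := by
          ext r
          simp [le_sub_iff_add_le]
        rw [this, Real.volume_Ico]
        congr 1
        ring
    _ = (π.prod volume) {q : Ω × ℝ | f q.1 ≤ q.2 - s ∧ q.2 < g q.1} :=
        (Measure.prod_apply hm).symm
    _ = ∫⁻ r, π {z | f z ≤ r - s ∧ r < g z} := Measure.prod_apply_symm hm

/-- The transport cost is monotone in the masses of the two families of off-diagonal quadrants. -/
lemma cost_le_of_quadrants_le {p : ℝ} (hp : 1 < p) (π₁ π₂ : Measure (ℝ × ℝ))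
    [SFinite π₁] [SFinite π₂]
    (h₁ : ∀ a b : ℝ, π₁ (Iic a ×ˢ Ioi b) ≤ π₂ (Iic a ×ˢ Ioi b))
    (h₂ : ∀ a b : ℝ, π₁ (Ioi b ×ˢ Iic a) ≤ π₂ (Ioi b ×ˢ Iic a)) :
    ∫⁻ z, ENNReal.ofReal (|z.2 - z.1| ^ p) ∂π₁ ≤ ∫⁻ z, ENNReal.ofReal (|z.2 - z.1| ^ p) ∂π₂ := by
  have key : ∀ (π : Measure (ℝ × ℝ)) [SFinite π],
      ∫⁻ z, ENNReal.ofReal (|z.2 - z.1| ^ p) ∂π =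
        ∫⁻ s in Ioi (0 : ℝ), ENNReal.ofReal (p * (p - 1) * s ^ (p - 2)) *
          ((∫⁻ r, π (Iic (r - s) ×ˢ Ioi r)) + ∫⁻ r, π (Ioi r ×ˢ Iic (r - s))) := by
    intro π _
    simp_rw [ofReal_abs_rpow_eq hp]
    rw [lintegral_lintegral_swap (by
      apply Measurable.aemeasurable
      simp only [Function.uncurry_def]
      fun_prop)]
    congr 1
    funext s
    rw [lintegral_const_mul _ (by fun_prop), lintegral_add_left (by fun_prop)]
    have e : ∀ z : ℝ × ℝ, -(z.2 - z.1) - s = z.1 - z.2 - s := fun z => by ring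
    simp_rw [e]
    rw [lintegral_hinge π measurable_fst measurable_snd,
      lintegral_hinge π measurable_snd measurable_fst]
    congr 3
    funext r
    congr 1
    ext z
    simp [and_comm]
  rw [key π₁, key π₂]
  refine lintegral_mono fun s => mul_le_mul_right (add_le_add ?_ ?_) _
  · exact lintegral_mono fun r => h₁ _ _
  · exact lintegral_mono fun r => h₂ _ _

/-! ### Couplings and joint distribution functions -/

lemma IsCoupling.isProbabilityMeasure {π : Measure (ℝ × ℝ)} {μ ν : Measure ℝ}
    [IsProbabilityMeasure μ] (h : IsCoupling π μ ν) : IsProbabilityMeasure π := by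
  constructor
  have : π.map Prod.fst univ = 1 := by rw [h.1]; exact measure_univ
  rwa [Measure.map_apply measurable_fst MeasurableSet.univ, preimage_univ] at this

lemma IsCoupling.Iic_prod_univ {π : Measure (ℝ × ℝ)} {μ ν : Measure ℝ}
    (h : IsCoupling π μ ν) (a : ℝ) : π (Iic a ×ˢ univ) = μ (Iic a) := by
  rw [← h.1, Measure.map_apply measurable_fst measurableSet_Iic, prod_univ]

lemma IsCoupling.univ_prod_Iic {π : Measure (ℝ × ℝ)} {μ ν : Measure ℝ}
    (h : IsCoupling π μ ν) (b : ℝ) : π (univ ×ˢ Iic b) = ν (Iic b) := by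
  rw [← h.2, Measure.map_apply measurable_snd measurableSet_Iic, univ_prod]

lemma IsCoupling.Iic_prod_Ioi {π : Measure (ℝ × ℝ)} {μ ν : Measure ℝ} [IsFiniteMeasure π]
    (h : IsCoupling π μ ν) (a b : ℝ) :
    π (Iic a ×ˢ Ioi b) = μ (Iic a) - π (Iic a ×ˢ Iic b) := by
  rw [← h.Iic_prod_univ a, ← measure_sdiff (prod_mono_right (subset_univ _))
    (measurableSet_Iic.prod measurableSet_Iic).nullMeasurableSet (measure_ne_top _ _)]
  congr 1
  ext z
  simp only [mem_prod, mem_Ioi, mem_Iic, mem_sdiff, mem_univ, and_true]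
  grind

lemma IsCoupling.Ioi_prod_Iic {π : Measure (ℝ × ℝ)} {μ ν : Measure ℝ} [IsFiniteMeasure π]
    (h : IsCoupling π μ ν) (a b : ℝ) :
    π (Ioi a ×ˢ Iic b) = ν (Iic b) - π (Iic a ×ˢ Iic b) := by
  rw [← h.univ_prod_Iic b, ← measure_sdiff (prod_mono_left (subset_univ _))
    (measurableSet_Iic.prod measurableSet_Iic).nullMeasurableSet (measure_ne_top _ _)]
  congr 1
  ext z
  simp only [mem_prod, mem_Ioi, mem_Iic, mem_sdiff, mem_univ, true_and]
  grind

/-- The upper Fréchet–Hoeffding bound. -/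
lemma IsCoupling.Iic_prod_Iic_le {π : Measure (ℝ × ℝ)} {μ ν : Measure ℝ}
    (h : IsCoupling π μ ν) (a b : ℝ) :
    π (Iic a ×ˢ Iic b) ≤ min (μ (Iic a)) (ν (Iic b)) := by
  rw [← h.Iic_prod_univ a, ← h.univ_prod_Iic b]
  exact le_min (measure_mono (prod_mono_right (subset_univ _)))
    (measure_mono (prod_mono_left (subset_univ _)))

lemma iSup_measure_Iic_nat (μ : Measure ℝ) : ⨆ n : ℕ, μ (Iic (n : ℝ)) = μ univ := by
  have hm : Monotone fun n : ℕ => Iic (n : ℝ) := fun m n h => Iic_subset_Iic.2 (by exact_mod_cast h)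
  rw [← hm.measure_iUnion]
  congr 1
  exact iUnion_eq_univ_iff.2 fun x => exists_nat_ge x

/-- A measure with joint distribution function `min (F x) (G y)` has marginals `μ` and `ν`: let
one of the two arguments tend to infinity. -/
lemma isCoupling_of_min {π : Measure (ℝ × ℝ)} {μ ν : Measure ℝ}
    [IsProbabilityMeasure π] [IsProbabilityMeasure μ] [IsProbabilityMeasure ν]
    (h : ∀ x y : ℝ, π (Iic x ×ˢ Iic y) = min (μ (Iic x)) (ν (Iic y))) : IsCoupling π μ ν := by
  constructor
  · refine Measure.ext_of_Iic _ _ fun a => ?_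
    rw [Measure.map_apply measurable_fst measurableSet_Iic, ← prod_univ]
    have hu : (univ : Set ℝ) = ⋃ n : ℕ, Iic (n : ℝ) :=
      (iUnion_eq_univ_iff.2 fun x => exists_nat_ge x).symm
    have hm : Monotone fun n : ℕ => Iic a ×ˢ Iic (n : ℝ) := fun m n hmn =>
      prod_mono_right (Iic_subset_Iic.2 (by exact_mod_cast hmn))
    rw [hu, prod_iUnion, hm.measure_iUnion]
    simp_rw [h]
    rw [← inf_iSup_eq, iSup_measure_Iic_nat, measure_univ]
    exact min_eq_left prob_le_one
  · refine Measure.ext_of_Iic _ _ fun a => ?_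
    rw [Measure.map_apply measurable_snd measurableSet_Iic, ← univ_prod]
    have hu : (univ : Set ℝ) = ⋃ n : ℕ, Iic (n : ℝ) :=
      (iUnion_eq_univ_iff.2 fun x => exists_nat_ge x).symm
    have hm : Monotone fun n : ℕ => Iic (n : ℝ) ×ˢ Iic a := fun m n hmn =>
      prod_mono_left (Iic_subset_Iic.2 (by exact_mod_cast hmn))
    rw [hu, iUnion_prod_const, hm.measure_iUnion]
    simp_rw [h]
    rw [← iSup_inf_eq, iSup_measure_Iic_nat, measure_univ]
    exact min_eq_right prob_le_one

lemma ext_of_Iic_prod_Iic {π₁ π₂ : Measure (ℝ × ℝ)}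
    [IsProbabilityMeasure π₁] [IsProbabilityMeasure π₂]
    (h : ∀ x y : ℝ, π₁ (Iic x ×ˢ Iic y) = π₂ (Iic x ×ˢ Iic y)) : π₁ = π₂ := by
  have hspan : IsCountablySpanning (range (Iic : ℝ → Set ℝ)) :=
    ⟨fun n : ℕ => Iic (n : ℝ), fun n => mem_range_self _,
      iUnion_eq_univ_iff.2 fun x => exists_nat_ge x⟩
  have hgen : (inferInstance : MeasurableSpace ℝ) = MeasurableSpace.generateFrom (range Iic) :=
    (BorelSpace.measurable_eq (α := ℝ)).trans (borel_eq_generateFrom_Iic ℝ)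
  refine ext_of_generate_finite (image2 (· ×ˢ ·) (range Iic) (range Iic)) ?_
    (isPiSystem_Iic.prod isPiSystem_Iic) ?_ (by simp)
  · rw [← generateFrom_prod_eq hspan hspan, ← hgen]
  · rintro _ ⟨_, ⟨x, rfl⟩, _, ⟨y, rfl⟩, rfl⟩
    exact h x y

/-! ### Existence of the comonotone coupling -/

/-- The quantile function (generalized inverse of the distribution function) of `μ`.
Only its values on `(0, 1)` are meaningful. -/
noncomputable def quantile (μ : Measure ℝ) (u : ℝ) : ℝ :=
  sInf {x | u ≤ ProbabilityTheory.cdf μ x}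

lemma quantile_le_iff (μ : Measure ℝ) {u : ℝ} (hu : u ∈ Ioo (0 : ℝ) 1)
    (x : ℝ) : quantile μ u ≤ x ↔ u ≤ ProbabilityTheory.cdf μ x := by
  have hbdd : BddBelow {x | u ≤ ProbabilityTheory.cdf μ x} := by
    obtain ⟨b, hb⟩ := ((ProbabilityTheory.tendsto_cdf_atBot μ).eventually_lt_const hu.1).exists
    refine ⟨b, fun y hy => ?_⟩
    by_contra! hlt
    exact absurd (ProbabilityTheory.monotone_cdf μ hlt.le) (not_le.2 (hb.trans_le hy))
  have hne : {x | u ≤ ProbabilityTheory.cdf μ x}.Nonempty := by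
    obtain ⟨b, hb⟩ := ((ProbabilityTheory.tendsto_cdf_atTop μ).eventually_const_lt hu.2).exists
    exact ⟨b, hb.le⟩
  refine ⟨fun h => ?_, fun h => csInf_le hbdd h⟩
  -- Right continuity: the distribution function at `x` is the infimum of its values beyond `x`.
  rw [← (ProbabilityTheory.cdf μ).iInf_Ioi_eq x]
  refine le_ciInf fun r => ?_
  obtain ⟨y, hy, hyr⟩ := exists_lt_of_csInf_lt hne (lt_of_le_of_lt h r.2)
  exact le_trans hy (ProbabilityTheory.monotone_cdf μ hyr.le)

lemma monotoneOn_quantile (μ : Measure ℝ) : MonotoneOn (quantile μ) (Ioo 0 1) :=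
  fun _ hu _ hv huv => (quantile_le_iff μ hu _).2 (huv.trans ((quantile_le_iff μ hv _).1 le_rfl))

lemma exists_comonotone (μ ν : Measure ℝ) [IsProbabilityMeasure μ] [IsProbabilityMeasure ν] :
    ∃ π : Measure (ℝ × ℝ), IsProbabilityMeasure π ∧
      ∀ x y : ℝ, π (Iic x ×ˢ Iic y) = min (μ (Iic x)) (ν (Iic y)) := by
  have hm : AEMeasurable (fun u => (quantile μ u, quantile ν u))
      (volume.restrict (Ioo (0 : ℝ) 1)) :=
    (aemeasurable_restrict_of_monotoneOn measurableSet_Ioo (monotoneOn_quantile μ)).prodMk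
      (aemeasurable_restrict_of_monotoneOn measurableSet_Ioo (monotoneOn_quantile ν))
  have : IsProbabilityMeasure (volume.restrict (Ioo (0 : ℝ) 1)) := ⟨by simp⟩
  refine ⟨(volume.restrict (Ioo (0 : ℝ) 1)).map fun u => (quantile μ u, quantile ν u),
    Measure.isProbabilityMeasure_map hm, fun x y => ?_⟩
  rw [Measure.map_apply_of_aemeasurable hm (measurableSet_Iic.prod measurableSet_Iic),
    Measure.restrict_apply' measurableSet_Ioo, ← ProbabilityTheory.ofReal_cdf μ,
    ← ProbabilityTheory.ofReal_cdf ν, ← ENNReal.ofReal_mono.map_min]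
  set m := min (ProbabilityTheory.cdf μ x) (ProbabilityTheory.cdf ν y) with hmdef
  have hm1 : m ≤ 1 := (min_le_left _ _).trans (ProbabilityTheory.cdf_le_one μ x)
  have hset : (fun u => (quantile μ u, quantile ν u)) ⁻¹' (Iic x ×ˢ Iic y) ∩ Ioo (0 : ℝ) 1
      = Iic m ∩ Ioo (0 : ℝ) 1 := by
    ext u
    simp only [mem_inter_iff, mem_preimage, mem_prod, mem_Iic]
    refine and_congr_left fun hu => ?_
    rw [quantile_le_iff μ hu, quantile_le_iff ν hu, hmdef, le_min_iff]
  rw [hset]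
  -- The endpoint matters only when `m = 1`, so the measure is squeezed between two intervals.
  apply le_antisymm
  · calc volume (Iic m ∩ Ioo (0 : ℝ) 1) ≤ volume (Ioc 0 m) :=
          measure_mono fun u hu => ⟨hu.2.1, hu.1⟩
      _ = ENNReal.ofReal m := by simp
  · calc ENNReal.ofReal m = volume (Ioo 0 m) := by simp
      _ ≤ volume (Iic m ∩ Ioo (0 : ℝ) 1) :=
          measure_mono fun u hu => ⟨hu.2.le, hu.1, hu.2.trans_le hm1⟩

/-- for `p > 1`, among all couplings of `μ` and `ν` the integral
`∫ |y-x|^p dπ` is minimized by the (unique) probability measure `π_M` on `ℝ²`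
whose joint distribution function is `min {F(x), G(y)}`, and
`W_p(μ,ν)^p = ∫ |y-x|^p dπ_M`. -/
theorem comonotone_coupling_minimizes (p : ℝ) (hp : 1 < p)
    (μ ν : MeasureTheory.Measure ℝ) [IsProbabilityMeasure μ] [IsProbabilityMeasure ν]
    (hμ : ∫⁻ x, ENNReal.ofReal (|x| ^ p) ∂μ ≠ ⊤)
    (hν : ∫⁻ x, ENNReal.ofReal (|x| ^ p) ∂ν ≠ ⊤) :
    (∃! πM : MeasureTheory.Measure (ℝ × ℝ), IsProbabilityMeasure πM ∧
        ∀ x y : ℝ, πM (Iic x ×ˢ Iic y) = min (μ (Iic x)) (ν (Iic y))) ∧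
      ∀ πM : MeasureTheory.Measure (ℝ × ℝ),
        (IsProbabilityMeasure πM ∧
          ∀ x y : ℝ, πM (Iic x ×ˢ Iic y) = min (μ (Iic x)) (ν (Iic y))) →
        IsCoupling πM μ ν ∧
          (∀ π : MeasureTheory.Measure (ℝ × ℝ), IsCoupling π μ ν →
            ∫⁻ z, ENNReal.ofReal (|z.2 - z.1| ^ p) ∂πM
              ≤ ∫⁻ z, ENNReal.ofReal (|z.2 - z.1| ^ p) ∂π) ∧
          WpPow p μ ν = ∫⁻ z, ENNReal.ofReal (|z.2 - z.1| ^ p) ∂πM := by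
  refine ⟨?_, ?_⟩
  · obtain ⟨π, hπ, h⟩ := exists_comonotone μ ν
    refine ⟨π, ⟨hπ, h⟩, ?_⟩
    rintro π' ⟨hπ', h'⟩
    exact ext_of_Iic_prod_Iic fun x y => by rw [h, h']
  · rintro πM ⟨hM, h⟩
    have hc : IsCoupling πM μ ν := isCoupling_of_min h
    have hopt : ∀ π : MeasureTheory.Measure (ℝ × ℝ), IsCoupling π μ ν →
        ∫⁻ z, ENNReal.ofReal (|z.2 - z.1| ^ p) ∂πM
          ≤ ∫⁻ z, ENNReal.ofReal (|z.2 - z.1| ^ p) ∂π := by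
      intro π hπ
      have := hπ.isProbabilityMeasure
      refine cost_le_of_quadrants_le hp πM π (fun a b => ?_) (fun a b => ?_)
      · rw [hc.Iic_prod_Ioi, hπ.Iic_prod_Ioi, h]
        exact tsub_le_tsub_left (hπ.Iic_prod_Iic_le a b) _
      · rw [hc.Ioi_prod_Iic, hπ.Ioi_prod_Iic, h]
        exact tsub_le_tsub_left (hπ.Iic_prod_Iic_le b a) _
    refine ⟨hc, hopt, ?_⟩
    unfold WpPow
    simp_rw [abs_sub_comm (Prod.fst _) (Prod.snd _)]
    exact le_antisymm (iInf₂_le πM hc) (le_iInf₂ hopt)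
end

section
/- Let (X,Y) be a comonotonic pair of real random variables with distribution functions F and G, and let φ: ℝ×ℝ → ℝ be a Borel function such that φ(X,Y) is integrable. Then E[φ(X,Y)] = ∫₀¹ φ(F⁻¹(u), G⁻¹(u)) du. -/
/-!
The law of `(X, Y)` is the image of Lebesgue measure on `(0, 1)` under `u ↦ (F⁻¹ u, G⁻¹ u)`, and the
theorem is the change of variables formula for this identity of laws. Finite measures on `ℝ × ℝ`
are determined by the quadrants `Iic x ×ˢ Iic y`, and both laws give such a quadrant the mass
`min (F x) (G y)`:

* for `(X, Y)`, because `{f ∘ Z ≤ x}` and `{g ∘ Z ≤ y}` are preimages under `Z` of lower sets of `ℝ`,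
  so one of them contains the other (`measure_quadrant_of_comonotonic`);
* for the quantile functions, because of the Galois connection `F⁻¹ u ≤ x ↔ u ≤ F x` for
  `0 < u < 1` (`qinv_cdf_le_iff`).
-/


open MeasureTheory ENNReal Set

/-- A pair `(X, Y)` of real random variables is comonotonic if it has the same joint
distribution as `(f(Z), g(Z))` for some random variable `Z` and nondecreasing `f, g`. -/
def Comonotonic {Ω : Type*} [MeasurableSpace Ω] (P : MeasureTheory.Measure Ω)
    (X Y : Ω → ℝ) : Prop :=
  ∃ (Z : Ω → ℝ) (f g : ℝ → ℝ), Measurable Z ∧ Monotone f ∧ Monotone g ∧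
    P.map (fun ω => (X ω, Y ω)) = P.map (fun ω => (f (Z ω), g (Z ω)))

/-- Galois connection between a distribution function and its quantile function. For `u` outside
`(0, 1)` the set defining `qinv` may be empty or unbounded below, and the equivalence can fail. -/
theorem qinv_cdf_le_iff (μ : Measure ℝ) {u : ℝ} (hu : u ∈ Ioo (0 : ℝ) 1) (x : ℝ) :
    qinv (ProbabilityTheory.cdf μ) u ≤ x ↔ u ≤ ProbabilityTheory.cdf μ x := by
  have hmono := ProbabilityTheory.monotone_cdf μ
  have hbdd : BddBelow {x : ℝ | u ≤ ProbabilityTheory.cdf μ x} := by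
    obtain ⟨b, hb⟩ := ((ProbabilityTheory.tendsto_cdf_atBot μ).eventually_lt_const hu.1).exists
    exact ⟨b, fun y hy => (hmono.reflect_lt (hb.trans_le hy)).le⟩
  have hne : {x : ℝ | u ≤ ProbabilityTheory.cdf μ x}.Nonempty := by
    obtain ⟨b, hb⟩ := ((ProbabilityTheory.tendsto_cdf_atTop μ).eventually_const_lt hu.2).exists
    exact ⟨b, hb.le⟩
  refine ⟨fun h => le_trans ?_ (hmono h), fun h => csInf_le hbdd h⟩
  -- By right continuity, the infimum defining the quantile is attained.
  refine ge_of_tendsto (((ProbabilityTheory.cdf μ).right_continuous _).mono Ioi_subset_Ici_self)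
    ?_
  filter_upwards [self_mem_nhdsWithin] with y hy
  obtain ⟨z, hz, hzy⟩ := (csInf_lt_iff hbdd hne).1 hy
  exact le_trans hz (hmono hzy.le)

theorem aemeasurable_qinv_cdf (μ : Measure ℝ) :
    AEMeasurable (qinv (ProbabilityTheory.cdf μ)) (volume.restrict (Ioo (0 : ℝ) 1)) := by
  refine aemeasurable_restrict_of_monotoneOn measurableSet_Ioo fun u hu v hv huv => ?_
  rw [qinv_cdf_le_iff μ hu]
  exact huv.trans ((qinv_cdf_le_iff μ hv _).1 le_rfl)

theorem measure_prod_ext_of_quadrants {μ ν : Measure (ℝ × ℝ)} [IsProbabilityMeasure μ]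
    [IsProbabilityMeasure ν] (h : ∀ x y, μ (Iic x ×ˢ Iic y) = ν (Iic x ×ˢ Iic y)) : μ = ν := by
  have hgen : MeasurableSpace.generateFrom (range (Iic : ℝ → Set ℝ)) = Real.measurableSpace :=
    (borel_eq_generateFrom_Iic ℝ).symm
  have hspan : IsCountablySpanning (range (Iic : ℝ → Set ℝ)) := by
    refine ⟨fun n : ℕ => Iic (n : ℝ), fun n => mem_range_self _, ?_⟩
    exact eq_univ_of_forall fun x => mem_iUnion.2 (exists_nat_ge x)
  refine ext_of_generate_finite _ (generateFrom_eq_prod hgen hgen hspan hspan).symm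
    (isPiSystem_Iic.prod isPiSystem_Iic) ?_ (by simp)
  rintro _ ⟨_, ⟨x, rfl⟩, _, ⟨y, rfl⟩, rfl⟩
  exact h x y

/-- A comonotonic pair has the upper Fréchet–Hoeffding bound as its joint distribution function. -/
theorem measure_quadrant_of_comonotonic {Ω : Type*} [MeasurableSpace Ω] {P : Measure Ω}
    {X Y : Ω → ℝ} (hX : Measurable X) (hY : Measurable Y) (hcom : Comonotonic P X Y) (x y : ℝ) :
    P.map (fun ω => (X ω, Y ω)) (Iic x ×ˢ Iic y) = min (P.map X (Iic x)) (P.map Y (Iic y)) := by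
  obtain ⟨Z, f, g, hZ, hf, hg, h⟩ := hcom
  have hfZ : Measurable fun ω => f (Z ω) := hf.measurable.comp hZ
  have hgZ : Measurable fun ω => g (Z ω) := hg.measurable.comp hZ
  have hXf : P.map X = P.map fun ω => f (Z ω) := by
    have := congrArg (Measure.map Prod.fst) h
    rwa [Measure.map_map measurable_fst (hX.prodMk hY),
      Measure.map_map measurable_fst (hfZ.prodMk hgZ)] at this
  have hYg : P.map Y = P.map fun ω => g (Z ω) := by
    have := congrArg (Measure.map Prod.snd) h
    rwa [Measure.map_map measurable_snd (hX.prodMk hY),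
      Measure.map_map measurable_snd (hfZ.prodMk hgZ)] at this
  rw [h, hXf, hYg, Measure.map_apply (hfZ.prodMk hgZ) (measurableSet_Iic.prod measurableSet_Iic),
    Measure.map_apply hfZ measurableSet_Iic, Measure.map_apply hgZ measurableSet_Iic,
    mk_preimage_prod]
  have hlf : IsLowerSet (f ⁻¹' Iic x) := fun a b hba ha => (hf hba).trans ha
  have hlg : IsLowerSet (g ⁻¹' Iic y) := fun a b hba ha => (hg hba).trans ha
  rcases hlf.total hlg with hs | hs
  · have hs' : (fun ω => f (Z ω)) ⁻¹' Iic x ⊆ (fun ω => g (Z ω)) ⁻¹' Iic y :=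
      preimage_mono (f := Z) hs
    rw [inter_eq_left.2 hs', min_eq_left (measure_mono hs')]
  · have hs' : (fun ω => g (Z ω)) ⁻¹' Iic y ⊆ (fun ω => f (Z ω)) ⁻¹' Iic x :=
      preimage_mono (f := Z) hs
    rw [inter_eq_right.2 hs', min_eq_right (measure_mono hs')]

theorem volume_Ioo_inter_Iic {c : ℝ} (hc : c ≤ 1) :
    volume (Ioo (0 : ℝ) 1 ∩ Iic c) = ENNReal.ofReal c := by
  rcases hc.lt_or_eq with hc | rfl
  · have : Ioo (0 : ℝ) 1 ∩ Iic c = Ioc 0 c := by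
      ext u
      simp only [mem_inter_iff, mem_Ioo, mem_Iic, mem_Ioc]
      exact ⟨fun h => ⟨h.1.1, h.2⟩, fun h => ⟨⟨h.1, h.2.trans_lt hc⟩, h.2⟩⟩
    rw [this, Real.volume_Ioc, sub_zero]
  · rw [inter_eq_left.2 fun u hu => hu.2.le, Real.volume_Ioo, sub_zero]

theorem map_qinv_quadrant (μ ν : Measure ℝ) [IsProbabilityMeasure μ] [IsProbabilityMeasure ν]
    (x y : ℝ) :
    (volume.restrict (Ioo (0 : ℝ) 1)).map
      (fun u => (qinv (ProbabilityTheory.cdf μ) u, qinv (ProbabilityTheory.cdf ν) u))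
      (Iic x ×ˢ Iic y) = min (μ (Iic x)) (ν (Iic y)) := by
  have hset : (fun u => (qinv (ProbabilityTheory.cdf μ) u, qinv (ProbabilityTheory.cdf ν) u)) ⁻¹'
      (Iic x ×ˢ Iic y) ∩ Ioo (0 : ℝ) 1 =
      Ioo (0 : ℝ) 1 ∩ Iic (min (ProbabilityTheory.cdf μ x) (ProbabilityTheory.cdf ν y)) := by
    rw [inter_comm]
    ext u
    refine and_congr_right fun hu => ?_
    simp only [mem_preimage, mem_prod, mem_Iic, le_min_iff, qinv_cdf_le_iff _ hu]
  rw [Measure.map_apply_of_aemeasurable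
      ((aemeasurable_qinv_cdf μ).prodMk (aemeasurable_qinv_cdf ν))
      (measurableSet_Iic.prod measurableSet_Iic),
    Measure.restrict_apply' measurableSet_Ioo, hset,
    volume_Ioo_inter_Iic ((min_le_left _ _).trans (ProbabilityTheory.cdf_le_one μ x)),
    ENNReal.ofReal_mono.map_min, ProbabilityTheory.ofReal_cdf, ProbabilityTheory.ofReal_cdf]

/-- for a comonotonic pair `(X,Y)` with distribution functions `F, G` and
a Borel `φ` with `φ(X,Y)` integrable, `E[φ(X,Y)] = ∫₀¹ φ(F⁻¹(u), G⁻¹(u)) du`. -/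
theorem comonotone_expectation {Ω : Type*} [MeasurableSpace Ω]
    (P : MeasureTheory.Measure Ω) [IsProbabilityMeasure P]
    (X Y : Ω → ℝ) (hX : Measurable X) (hY : Measurable Y)
    (hcom : Comonotonic P X Y)
    (F G : ℝ → ℝ)
    (hF : ∀ x, F x = (P {ω | X ω ≤ x}).toReal)
    (hG : ∀ y, G y = (P {ω | Y ω ≤ y}).toReal)
    (φ : ℝ × ℝ → ℝ) (hφ : Measurable φ)
    (hint : Integrable (fun ω => φ (X ω, Y ω)) P) :
    ∫ ω, φ (X ω, Y ω) ∂P = ∫ u in Ioo (0:ℝ) 1, φ (qinv F u, qinv G u) := by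
  have := Measure.isProbabilityMeasure_map (μ := P) hX.aemeasurable
  have := Measure.isProbabilityMeasure_map (μ := P) hY.aemeasurable
  have := Measure.isProbabilityMeasure_map (μ := P) (hX.prodMk hY).aemeasurable
  have hF' : F = ProbabilityTheory.cdf (P.map X) := by
    funext x
    rw [hF, ProbabilityTheory.cdf_eq_real, map_measureReal_apply hX measurableSet_Iic]
    rfl
  have hG' : G = ProbabilityTheory.cdf (P.map Y) := by
    funext y
    rw [hG, ProbabilityTheory.cdf_eq_real, map_measureReal_apply hY measurableSet_Iic]
    rfl
  subst hF' hG'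
  have hq := (aemeasurable_qinv_cdf (P.map X)).prodMk (aemeasurable_qinv_cdf (P.map Y))
  have : IsProbabilityMeasure (volume.restrict (Ioo (0 : ℝ) 1)) := ⟨by simp⟩
  have := Measure.isProbabilityMeasure_map hq
  have hlaw := measure_prod_ext_of_quadrants fun x y =>
    (measure_quadrant_of_comonotonic hX hY hcom x y).trans
      (map_qinv_quadrant (P.map X) (P.map Y) x y).symm
  rw [← integral_map (hX.prodMk hY).aemeasurable hφ.aestronglyMeasurable, hlaw,
    integral_map hq hφ.aestronglyMeasurable]
end

section
/- Let X, Y be real random variables with distribution functions F and G and joint distribution function H(x,y) = P(X ≤ x, Y ≤ y). Then the pair (X,Y) is comonotonic if and only if H(x,y) = min{F(x), G(y)} for all (x,y) ∈ ℝ². -/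
/-!
If `(X, Y)` is distributed as `(f(Z), g(Z))`, the events `f(Z) ≤ x` and `g(Z) ≤ y` are preimages
under `Z` of lower sets of `ℝ`, hence nested, so the probability of their intersection is the
smaller of the two probabilities.

Conversely, `H(x, y) = min (F x) (G y)` says that one of `X ≤ x, Y > y` and `X > x, Y ≤ y` is a
null event. Discarding these null events for rational `x, y` leaves a set of full measure on which
the values of `(X, Y)` form a chain (`ae_chain`). On a chain each of `X`, `Y` is a nondecreasing
`1`-Lipschitz function of `Z = X + Y`, and such a function extends to a monotone function on all
of `ℝ` (`exists_monotone_factor`).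
-/

open MeasureTheory ENNReal Set

/-- If along `S` the increments of `x` are at most the positive parts of those of `z`, then on `S`
the function `x` factors through `z` by a monotone function on the whole line. The hypothesis is a
one-sided Lipschitz bound; bare monotonicity on `S` would allow `x` to be unbounded near a finite
value of `z`, where no real-valued monotone extension exists. -/
lemma exists_monotone_factor {Ω : Type*} (S : Set Ω) (hS : S.Nonempty) (x z : Ω → ℝ)
    (h : ∀ a ∈ S, ∀ b ∈ S, x a ≤ x b + max (z a - z b) 0) :
    ∃ f : ℝ → ℝ, Monotone f ∧ ∀ a ∈ S, f (z a) = x a := by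
  have : Nonempty S := hS.to_subtype
  have key : ∀ t : ℝ, ∀ a ∈ S, ∀ b : S,
      x a - max (z a - t) 0 ≤ x b + max (t - z b) 0 := by
    intro t a ha b
    have h1 := h a ha b b.2
    have h2 : max (z a - z b) 0 ≤ max (z a - t) 0 + max (t - z b) 0 :=
      max_le (by linarith [le_max_left (z a - t) 0, le_max_left (t - z b) 0])
        (by positivity)
    linarith
  have bdd : ∀ t : ℝ, BddBelow (range fun b : S => x b + max (t - z b) 0) := by
    intro t
    obtain ⟨a, ha⟩ := hS
    exact ⟨_, by rintro _ ⟨b, rfl⟩; exact key t a ha b⟩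
  -- the McShane extension for the one-sided distance `max (t - s) 0`
  refine ⟨fun t => ⨅ b : S, (x b + max (t - z b) 0), ?_, ?_⟩
  · intro s t hst
    refine ciInf_mono (bdd s) fun b => ?_
    gcongr
  · intro a ha
    apply le_antisymm
    · simpa using ciInf_le (bdd (z a)) ⟨a, ha⟩
    · refine le_ciInf fun b => ?_
      simpa using key (z a) a ha b

/-- If, for all thresholds, one of the two "crossing" events is null, then the values of `(X, Y)`
almost surely lie in a chain of `ℝ²`. -/
lemma ae_chain {Ω : Type*} [MeasurableSpace Ω] (P : Measure Ω) (X Y : Ω → ℝ)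
    (h : ∀ x y : ℝ, P {ω | X ω ≤ x ∧ y < Y ω} = 0 ∨ P {ω | x < X ω ∧ Y ω ≤ y} = 0) :
    ∃ S : Set Ω, (∀ᵐ ω ∂P, ω ∈ S) ∧
      ∀ a ∈ S, ∀ b ∈ S, X a < X b → Y a ≤ Y b := by
  refine ⟨{ω | ∀ q r : ℚ,
      (P {ω | X ω ≤ q ∧ (r : ℝ) < Y ω} = 0 → ¬ (X ω ≤ q ∧ (r : ℝ) < Y ω)) ∧
      (P {ω | (q : ℝ) < X ω ∧ Y ω ≤ r} = 0 → ¬ ((q : ℝ) < X ω ∧ Y ω ≤ r))}, ?_, ?_⟩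
  · simp only [mem_ofPred_eq, ae_all_iff, Filter.eventually_and, Filter.eventually_imp_distrib_left]
    intro q r
    exact ⟨fun h0 => measure_eq_zero_iff_ae_notMem.1 h0,
      fun h0 => measure_eq_zero_iff_ae_notMem.1 h0⟩
  · intro a ha b hb hX
    by_contra! hY
    obtain ⟨q, hq1, hq2⟩ := exists_rat_btwn hX
    obtain ⟨r, hr1, hr2⟩ := exists_rat_btwn hY
    rcases h q r with h0 | h0
    · exact (ha q r).1 h0 ⟨hq1.le, hr2⟩
    · exact (hb q r).2 h0 ⟨hq2, hr1.le⟩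

/-- `(X,Y)` is comonotonic iff the joint distribution function equals
the Fréchet–Hoeffding upper bound: `H(x,y) = min {F(x), G(y)}` for all `x, y`. -/
theorem comonotonic_iff_joint_cdf_eq_min {Ω : Type*} [MeasurableSpace Ω]
    (P : MeasureTheory.Measure Ω) [IsProbabilityMeasure P]
    (X Y : Ω → ℝ) (hX : Measurable X) (hY : Measurable Y)
    (F G : ℝ → ℝ) (H : ℝ → ℝ → ℝ)
    (hF : ∀ x, F x = (P {ω | X ω ≤ x}).toReal)
    (hG : ∀ y, G y = (P {ω | Y ω ≤ y}).toReal)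
    (hH : ∀ x y, H x y = (P {ω | X ω ≤ x ∧ Y ω ≤ y}).toReal) :
    Comonotonic P X Y ↔ ∀ x y : ℝ, H x y = min (F x) (G y) := by
  constructor
  · rintro ⟨Z, f, g, hZ, hf, hg, hlaw⟩ x y
    have hfZ : Measurable fun ω => f (Z ω) := hf.measurable.comp hZ
    have hgZ : Measurable fun ω => g (Z ω) := hg.measurable.comp hZ
    have transfer : ∀ s : Set (ℝ × ℝ), MeasurableSet s →
        P {ω | (X ω, Y ω) ∈ s} = P {ω | (f (Z ω), g (Z ω)) ∈ s} := by
      intro s hs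
      have := congrArg (fun m => m s) hlaw
      simp only [Measure.map_apply (hX.prodMk hY) hs,
        Measure.map_apply (hfZ.prodMk hgZ) hs] at this
      exact this
    have eF : P {ω | X ω ≤ x} = P {ω | f (Z ω) ≤ x} :=
      transfer {p | p.1 ≤ x} (measurableSet_le measurable_fst measurable_const)
    have eG : P {ω | Y ω ≤ y} = P {ω | g (Z ω) ≤ y} :=
      transfer {p | p.2 ≤ y} (measurableSet_le measurable_snd measurable_const)
    have eH : P {ω | X ω ≤ x ∧ Y ω ≤ y} = P {ω | f (Z ω) ≤ x ∧ g (Z ω) ≤ y} :=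
      transfer {p | p.1 ≤ x ∧ p.2 ≤ y}
        ((measurableSet_le measurable_fst measurable_const).inter
          (measurableSet_le measurable_snd measurable_const))
    have lf : IsLowerSet {z | f z ≤ x} := fun a b hba ha => (hf hba).trans ha
    have lg : IsLowerSet {z | g z ≤ y} := fun a b hba ha => (hg hba).trans ha
    rw [hH, hF, hG, eF, eG, eH]
    rcases lf.total lg with hsub | hsub
    · have hsub' : {ω | f (Z ω) ≤ x} ⊆ {ω | g (Z ω) ≤ y} := fun ω hω => hsub hω
      have e : {ω | f (Z ω) ≤ x ∧ g (Z ω) ≤ y} = {ω | f (Z ω) ≤ x} :=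
        inter_eq_left.2 hsub'
      rw [e, min_eq_left (toReal_mono (measure_ne_top _ _) (measure_mono hsub'))]
    · have hsub' : {ω | g (Z ω) ≤ y} ⊆ {ω | f (Z ω) ≤ x} := fun ω hω => hsub hω
      have e : {ω | f (Z ω) ≤ x ∧ g (Z ω) ≤ y} = {ω | g (Z ω) ≤ y} :=
        inter_eq_right.2 hsub'
      rw [e, min_eq_right (toReal_mono (measure_ne_top _ _) (measure_mono hsub'))]
  · intro hmin
    have hnull : ∀ x y : ℝ,
        P {ω | X ω ≤ x ∧ y < Y ω} = 0 ∨ P {ω | x < X ω ∧ Y ω ≤ y} = 0 := by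
      intro x y
      have mX : MeasurableSet {ω | X ω ≤ x} := measurableSet_le hX measurable_const
      have mY : MeasurableSet {ω | Y ω ≤ y} := measurableSet_le hY measurable_const
      have e1 := measureReal_inter_add_sdiff (μ := P) (s := {ω | X ω ≤ x}) mY
      have e2 := measureReal_inter_add_sdiff (μ := P) (s := {ω | Y ω ≤ y}) mX
      rw [inter_comm] at e2
      have d1 : {ω | X ω ≤ x} \ {ω | Y ω ≤ y} = {ω | X ω ≤ x ∧ y < Y ω} := by
        ext ω; simp
      have d2 : {ω | Y ω ≤ y} \ {ω | X ω ≤ x} = {ω | x < X ω ∧ Y ω ≤ y} := by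
        ext ω; simp [and_comm]
      rw [d1] at e1
      rw [d2] at e2
      have e0 : P.real ({ω | X ω ≤ x} ∩ {ω | Y ω ≤ y})
          = min (P.real {ω | X ω ≤ x}) (P.real {ω | Y ω ≤ y}) := by
        have := hmin x y
        rw [hH, hF, hG] at this
        exact this
      rcases min_choice (P.real {ω | X ω ≤ x}) (P.real {ω | Y ω ≤ y}) with hm | hm
      · left
        rw [← measureReal_eq_zero_iff]
        linarith
      · right
        rw [← measureReal_eq_zero_iff]
        linarith
    obtain ⟨S, hS, hchain⟩ := ae_chain P X Y hnull
    have hne : S.Nonempty := hS.exists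
    obtain ⟨f, hf, hfX⟩ := exists_monotone_factor S hne X (fun ω => X ω + Y ω) (by
      intro a ha b hb
      have h0 := le_max_right (X a + Y a - (X b + Y b)) 0
      have h1 := le_max_left (X a + Y a - (X b + Y b)) 0
      rcases le_or_gt (X a) (X b) with h | h
      · linarith
      · linarith [hchain b hb a ha h])
    obtain ⟨g, hg, hgY⟩ := exists_monotone_factor S hne Y (fun ω => X ω + Y ω) (by
      intro a ha b hb
      have h0 := le_max_right (X a + Y a - (X b + Y b)) 0
      have h1 := le_max_left (X a + Y a - (X b + Y b)) 0
      rcases lt_or_ge (X a) (X b) with h | h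
      · linarith [hchain a ha b hb h]
      · linarith)
    refine ⟨fun ω => X ω + Y ω, f, g, hX.add hY, hf, hg, Measure.map_congr ?_⟩
    filter_upwards [hS] with ω hω
    rw [hfX ω hω, hgY ω hω]
end
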